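/- arXiv:1712.10327 — 6 statements merged into one kernel-verified Lean document; each statement's English description precedes it below -/
import Mathlib

section
/- Let Ω be an open convex set of ℝⁿ, let a, b : Ω → ℝ be C² functions with a > 0 and b > 0 on Ω, and let α, β > 0 be such that a^α is concave on Ω and b^β is concave on Ω. Then (ab)^γ is concave on Ω, where γ = αβ/(α+β) (i.e. 1/γ = 1/α + 1/β). -/
theorem aux_geom {s t x y u v P Q p q : ℝ} (hs : 0 ≤ s) (ht : 0 ≤ t) (hx : 0 < x) (hy : 0 < y)
    (hu : 0 < u) (hv : 0 < v) (hP : 0 < P) (hQ : 0 < Q) (hp : 0 ≤ p) (hq : 0 ≤ q) (hpq : p + q = 1)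
    (h1 : s * x + t * u ≤ P) (h2 : s * y + t * v ≤ Q) :
    s * (x ^ p * y ^ q) + t * (u ^ p * v ^ q) ≤ P ^ p * Q ^ q := by
  have key : ∀ x y : ℝ, 0 < x → 0 < y →
      x ^ p * y ^ q ≤ (p * (x / P) + q * (y / Q)) * (P ^ p * Q ^ q) := by
    intro x y hx hy
    have h := Real.geom_mean_le_arith_mean2_weighted hp hq (div_pos hx hP).le (div_pos hy hQ).le hpq
    rw [Real.div_rpow hx.le hP.le, Real.div_rpow hy.le hQ.le, div_mul_div_comm,
      div_le_iff₀ (by positivity)] at h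
    exact h
  have e1 := mul_le_mul_of_nonneg_left (key x y hx hy) hs
  have e2 := mul_le_mul_of_nonneg_left (key u v hu hv) ht
  have f1 : (s * x + t * u) / P ≤ 1 := (div_le_one hP).2 h1
  have f2 : (s * y + t * v) / Q ≤ 1 := (div_le_one hQ).2 h2
  have f3 : p * ((s * x + t * u) / P) + q * ((s * y + t * v) / Q) ≤ 1 := by
    nlinarith [mul_le_mul_of_nonneg_left f1 hp, mul_le_mul_of_nonneg_left f2 hq]
  have f4 := mul_le_mul_of_nonneg_right f3 (show 0 ≤ P ^ p * Q ^ q by positivity)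
  calc _ ≤ _ := add_le_add e1 e2
    _ = (p * ((s * x + t * u) / P) + q * ((s * y + t * v) / Q)) * (P ^ p * Q ^ q) := by ring
    _ ≤ _ := by simpa using f4

theorem stmt1 {n : ℕ} (Ω : Set (Fin n → ℝ)) (hΩopen : IsOpen Ω) (hΩconv : Convex ℝ Ω)
    (a b : (Fin n → ℝ) → ℝ)
    (ha : ContDiffOn ℝ 2 a Ω) (hb : ContDiffOn ℝ 2 b Ω)
    (hapos : ∀ x ∈ Ω, 0 < a x) (hbpos : ∀ x ∈ Ω, 0 < b x)
    (α β : ℝ) (hα : 0 < α) (hβ : 0 < β)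
    (haconc : ConcaveOn ℝ Ω (fun x => a x ^ α))
    (hbconc : ConcaveOn ℝ Ω (fun x => b x ^ β)) :
    ConcaveOn ℝ Ω (fun x => (a x * b x) ^ (α * β / (α + β))) := by
  have e : ∀ x ∈ Ω, (a x * b x) ^ (α * β / (α + β)) =
      (a x ^ α) ^ (β / (α + β)) * (b x ^ β) ^ (α / (α + β)) := by
    intro x hx
    rw [Real.mul_rpow (hapos x hx).le (hbpos x hx).le, ← Real.rpow_mul (hapos x hx).le,
      ← Real.rpow_mul (hbpos x hx).le]
    congr 2 <;> ring
  refine ⟨hΩconv, ?_⟩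
  intro x hx y hy s t hs ht hst
  have hz := hΩconv hx hy hs ht hst
  have h1 := haconc.2 hx hy hs ht hst
  have h2 := hbconc.2 hx hy hs ht hst
  simp only [smul_eq_mul] at h1 h2 ⊢
  rw [e x hx, e y hy, e _ hz]
  have hp : ∀ z ∈ Ω, 0 < a z ^ α := fun z hz => Real.rpow_pos_of_pos (hapos z hz) _
  have hq : ∀ z ∈ Ω, 0 < b z ^ β := fun z hz => Real.rpow_pos_of_pos (hbpos z hz) _
  exact aux_geom hs ht (hp x hx) (hq x hx) (hp y hy) (hq y hy) (hp _ hz) (hq _ hz)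
    (by positivity) (by positivity) (by field_simp; ring) h1 h2
end

section
/- Let n ≥ 1, let l and k be integers with 1 ≤ l ≤ n and 0 ≤ k ≤ n - l, and let σ_j denote the j-th elementary symmetric polynomial in n real variables. Then the function x ↦ σ_{k+l}(x)/σ_k(x) is (1/l)-concave on the positive orthant (0, ∞)ⁿ, i.e. (σ_{k+l}/σ_k)^{1/l} is concave on (0, ∞)ⁿ. -/
/-- The `k`-th elementary symmetric polynomial in `n` real variables. -/
noncomputable def esymm (n k : ℕ) (x : Fin n → ℝ) : ℝ :=
  ∑ s ∈ Finset.powersetCard k (Finset.univ : Finset (Fin n)), ∏ i ∈ s, x i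

noncomputable def ee {n : ℕ} (s : Finset (Fin n)) (k : ℕ) (x : Fin n → ℝ) : ℝ :=
  ∑ t ∈ Finset.powersetCard k s, ∏ i ∈ t, x i

lemma ee_zero {n : ℕ} (s : Finset (Fin n)) (x : Fin n → ℝ) : ee s 0 x = 1 := by
  simp [ee]

lemma ee_one {n : ℕ} (s : Finset (Fin n)) (x : Fin n → ℝ) : ee s 1 x = ∑ i ∈ s, x i := by
  simp [ee, Finset.powersetCard_one]

lemma ee_insert {n : ℕ} (s : Finset (Fin n)) (a : Fin n) (ha : a ∉ s) (k : ℕ) (x : Fin n → ℝ) :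
    ee (insert a s) (k + 1) x = ee s (k + 1) x + x a * ee s k x := by
  unfold ee
  rw [Finset.powersetCard_succ_insert ha, Finset.sum_union, Finset.sum_image, Finset.mul_sum]
  · congr 1
    apply Finset.sum_congr rfl
    intro t ht
    rw [Finset.prod_insert]
    intro h
    exact ha ((Finset.mem_powersetCard.1 ht).1 h)
  · intro t ht u hu h
    have h1 : a ∉ t := fun h => ha ((Finset.mem_powersetCard.1 ht).1 h)
    have h2 : a ∉ u := fun h => ha ((Finset.mem_powersetCard.1 hu).1 h)
    rw [← Finset.erase_insert h1, ← Finset.erase_insert h2]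
    exact congrArg (fun z => Finset.erase z a) h
  · rw [Finset.disjoint_left]
    intro t ht hu
    obtain ⟨u, _, rfl⟩ := Finset.mem_image.1 hu
    exact ha ((Finset.mem_powersetCard.1 ht).1 (Finset.mem_insert_self a u))

lemma ee_erase {n : ℕ} (s : Finset (Fin n)) (a : Fin n) (ha : a ∈ s) (k : ℕ) (x : Fin n → ℝ) :
    ee s (k + 1) x = ee (s.erase a) (k + 1) x + x a * ee (s.erase a) k x := by
  rw [← ee_insert _ _ (Finset.notMem_erase a s), Finset.insert_erase ha]

lemma ee_pos {n : ℕ} (s : Finset (Fin n)) (k : ℕ) (hk : k ≤ s.card) (x : Fin n → ℝ)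
    (hx : ∀ i, 0 < x i) : 0 < ee s k x := by
  unfold ee
  apply Finset.sum_pos
  · intro t _
    exact Finset.prod_pos fun i _ => hx i
  · exact Finset.powersetCard_nonempty.2 hk

lemma ee_euler {n : ℕ} (x : Fin n → ℝ) (s : Finset (Fin n)) : ∀ k : ℕ,
    ((k : ℝ) + 1) * ee s (k + 1) x = ∑ i ∈ s, x i * ee (s.erase i) k x := by
  induction s using Finset.induction_on with
  | empty =>
    intro k
    have : Finset.powersetCard (k + 1) (∅ : Finset (Fin n)) = ∅ :=
      Finset.powersetCard_eq_empty.2 (by simp)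
    simp [ee, this]
  | insert a s ha ih =>
    intro k
    rw [Finset.sum_insert ha, Finset.erase_insert ha, ee_insert s a ha]
    cases k with
    | zero => simp [ee_zero, ee_one]; ring
    | succ j =>
      have h : ∑ i ∈ s, x i * ee ((insert a s).erase i) (j + 1) x
          = ∑ i ∈ s, x i * ee (s.erase i) (j + 1) x
            + x a * ∑ i ∈ s, x i * ee (s.erase i) j x := by
        rw [Finset.mul_sum, ← Finset.sum_add_distrib]
        apply Finset.sum_congr rfl
        intro i hi
        have hne : a ≠ i := fun h => ha (h ▸ hi)
        rw [Finset.erase_insert_of_ne hne,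
          ee_insert _ _ (fun h => ha (Finset.mem_of_mem_erase h))]
        ring
      rw [h, ← ih, ← ih]
      push_cast
      ring

lemma par_super (a b c d p : ℝ) (ha : 0 < a) (hb : 0 < b) (hc : 0 < c) (hd : 0 < d)
    (hp : b + d ≤ p) : a * b / (a + b) + c * d / (c + d) ≤ (a + c) * p / (a + c + p) := by
  have h1 : (a + c) * (b + d) / (a + c + (b + d)) ≤ (a + c) * p / (a + c + p) := by
    rw [div_le_div_iff₀ (by positivity) (by linarith)]
    nlinarith [mul_nonneg (sq_nonneg (a + c)) (sub_nonneg.2 hp)]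
  refine le_trans ?_ h1
  rw [div_add_div _ _ (by positivity) (by positivity),
    div_le_div_iff₀ (by positivity) (by positivity)]
  nlinarith [sq_nonneg (a * d - b * c)]

lemma phi_rec {n : ℕ} (s : Finset (Fin n)) (k : ℕ) (hk : k + 2 ≤ s.card) (x : Fin n → ℝ)
    (hx : ∀ i, 0 < x i) :
    ee s (k + 2) x / ee s (k + 1) x = ((k : ℝ) + 2)⁻¹ * ∑ i ∈ s,
      x i * (ee (s.erase i) (k + 1) x / ee (s.erase i) k x) /
        (x i + ee (s.erase i) (k + 1) x / ee (s.erase i) k x) := by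
  have h := ee_euler x s (k + 1)
  have hpos := ee_pos s (k + 1) (by omega) x hx
  have h2 : ∑ i ∈ s, x i * (ee (s.erase i) (k + 1) x / ee (s.erase i) k x) /
        (x i + ee (s.erase i) (k + 1) x / ee (s.erase i) k x)
      = (∑ i ∈ s, x i * ee (s.erase i) (k + 1) x) / ee s (k + 1) x := by
    rw [Finset.sum_div]
    apply Finset.sum_congr rfl
    intro i hi
    have hc : (s.erase i).card = s.card - 1 := Finset.card_erase_of_mem hi
    have p1 := ee_pos (s.erase i) k (by omega) x hx
    have p2 := ee_pos (s.erase i) (k + 1) (by omega) x hx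
    have p3 := hx i
    rw [ee_erase s i hi k x]
    field_simp
    ring
  rw [h2, ← h]
  push_cast
  field_simp
  ring

lemma phi_super {n : ℕ} (x y : Fin n → ℝ) (hx : ∀ i, 0 < x i) (hy : ∀ i, 0 < y i) (k : ℕ) :
    ∀ s : Finset (Fin n), k + 1 ≤ s.card →
    ee s (k + 1) x / ee s k x + ee s (k + 1) y / ee s k y
      ≤ ee s (k + 1) (x + y) / ee s k (x + y) := by
  induction k with
  | zero =>
    intro s _
    simp [ee_zero, ee_one, Finset.sum_add_distrib]
  | succ k ih =>
    intro s hs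
    have hxy : ∀ i, 0 < (x + y) i := fun i => add_pos (hx i) (hy i)
    rw [phi_rec s k hs x hx, phi_rec s k hs y hy, phi_rec s k hs _ hxy, ← mul_add,
      ← Finset.sum_add_distrib]
    apply mul_le_mul_of_nonneg_left _ (by positivity)
    apply Finset.sum_le_sum
    intro i hi
    have hc : (s.erase i).card = s.card - 1 := Finset.card_erase_of_mem hi
    exact par_super _ _ _ _ _ (hx i)
      (div_pos (ee_pos _ _ (by omega) x hx) (ee_pos _ _ (by omega) x hx)) (hy i)
      (div_pos (ee_pos _ _ (by omega) y hy) (ee_pos _ _ (by omega) y hy))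
      (ih (s.erase i) (by omega))

lemma geom_super (l : ℕ) (hl : 1 ≤ l) (a b c : ℕ → ℝ) (ha : ∀ j < l, 0 < a j)
    (hb : ∀ j < l, 0 < b j) (hc : ∀ j < l, a j + b j ≤ c j) :
    (∏ j ∈ Finset.range l, a j) ^ ((l : ℝ)⁻¹) + (∏ j ∈ Finset.range l, b j) ^ ((l : ℝ)⁻¹)
      ≤ (∏ j ∈ Finset.range l, c j) ^ ((l : ℝ)⁻¹) := by
  have hl0 : (0 : ℝ) < l := by exact_mod_cast hl
  have hcp : ∀ j ∈ Finset.range l, 0 < c j := fun j hj => by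
    have hj := Finset.mem_range.1 hj
    linarith [ha j hj, hb j hj, hc j hj]
  have hC : 0 < ∏ j ∈ Finset.range l, c j := Finset.prod_pos hcp
  have key : ∀ d : ℕ → ℝ, (∀ j < l, 0 < d j) →
      (∏ j ∈ Finset.range l, d j) ^ ((l : ℝ)⁻¹) ≤
        (∑ j ∈ Finset.range l, (l : ℝ)⁻¹ * (d j / c j)) *
          (∏ j ∈ Finset.range l, c j) ^ ((l : ℝ)⁻¹) := by
    intro d hd
    have h0 : ∀ j ∈ Finset.range l, 0 ≤ d j / c j := fun j hj =>
      (div_pos (hd j (Finset.mem_range.1 hj)) (hcp j hj)).le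
    have h := Real.geom_mean_le_arith_mean_weighted (Finset.range l) (fun _ => (l : ℝ)⁻¹)
      (fun j => d j / c j) (fun _ _ => by positivity)
      (by simp; field_simp) h0
    rw [Real.finsetProd_rpow _ _ h0, Finset.prod_div_distrib, Real.div_rpow
      (Finset.prod_nonneg fun j hj => (hd j (Finset.mem_range.1 hj)).le) hC.le] at h
    rwa [div_le_iff₀ (by positivity)] at h
  have h1 := key a ha
  have h2 := key b hb
  have h3 : ∑ j ∈ Finset.range l, (l : ℝ)⁻¹ * (a j / c j)
      + ∑ j ∈ Finset.range l, (l : ℝ)⁻¹ * (b j / c j) ≤ 1 := by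
    rw [← Finset.sum_add_distrib]
    calc _ ≤ ∑ j ∈ Finset.range l, (l : ℝ)⁻¹ := by
          apply Finset.sum_le_sum
          intro j hj
          rw [← mul_add, ← add_div]
          have : (a j + b j) / c j ≤ 1 :=
            (div_le_one (hcp j hj)).2 (hc j (Finset.mem_range.1 hj))
          nlinarith [inv_pos.2 hl0]
      _ = 1 := by simp; field_simp
  have h4 : 0 ≤ (∏ j ∈ Finset.range l, c j) ^ ((l : ℝ)⁻¹) := by positivity
  nlinarith

lemma ee_tele {n : ℕ} (s : Finset (Fin n)) (k : ℕ) (x : Fin n → ℝ) (hx : ∀ i, 0 < x i)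
    (l : ℕ) : k + l ≤ s.card → ee s (k + l) x / ee s k x
      = ∏ j ∈ Finset.range l, ee s (k + j + 1) x / ee s (k + j) x := by
  induction l with
  | zero =>
    intro h
    simp [(ee_pos s k h x hx).ne']
  | succ l ih =>
    intro h
    rw [Finset.prod_range_succ, ← ih (by omega)]
    have p1 := ee_pos s k (by omega) x hx
    have p2 := ee_pos s (k + l) (by omega) x hx
    rw [← add_assoc]
    field_simp

lemma ee_smul {n : ℕ} (s : Finset (Fin n)) (k : ℕ) (c : ℝ) (x : Fin n → ℝ) :
    ee s k (c • x) = c ^ k * ee s k x := by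
  unfold ee
  rw [Finset.mul_sum]
  apply Finset.sum_congr rfl
  intro t ht
  simp [Finset.prod_mul_distrib, (Finset.mem_powersetCard.1 ht).2]

theorem stmt7 (n l k : ℕ) (hn : 1 ≤ n) (hl : 1 ≤ l) (hln : l ≤ n) (hk : k ≤ n - l) :
    ConcaveOn ℝ {x : Fin n → ℝ | ∀ i, 0 < x i}
      (fun x => (esymm n (k + l) x / esymm n k x) ^ ((l : ℝ)⁻¹)) := by
  have hcard : (Finset.univ : Finset (Fin n)).card = n := by simp
  have he : ∀ (j : ℕ) (x : Fin n → ℝ), esymm n j x = ee Finset.univ j x := fun _ _ => rfl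
  simp only [he]
  have hom : ∀ (c : ℝ) (x : Fin n → ℝ), 0 < c → (∀ i, 0 < x i) →
      (ee Finset.univ (k + l) (c • x) / ee Finset.univ k (c • x)) ^ ((l : ℝ)⁻¹)
        = c * (ee Finset.univ (k + l) x / ee Finset.univ k x) ^ ((l : ℝ)⁻¹) := by
    intro c x hc hx
    have p1 := ee_pos Finset.univ k (by omega) x hx
    have p2 := ee_pos Finset.univ (k + l) (by omega) x hx
    have : ee Finset.univ (k + l) (c • x) / ee Finset.univ k (c • x)
        = c ^ l * (ee Finset.univ (k + l) x / ee Finset.univ k x) := by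
      rw [ee_smul, ee_smul, pow_add]
      field_simp
    rw [this, Real.mul_rpow (by positivity) (by positivity),
      Real.pow_rpow_inv_natCast hc.le (by omega)]
  have hconv : Convex ℝ {x : Fin n → ℝ | ∀ i, 0 < x i} := by
    have : {x : Fin n → ℝ | ∀ i, 0 < x i} = Set.univ.pi (fun _ => Set.Ioi 0) := by
      ext x; simp
    rw [this]
    exact convex_pi fun i _ => convex_Ioi 0
  rw [concaveOn_iff_forall_pos]
  refine ⟨hconv, ?_⟩
  intro x hx y hy a b ha hb _
  have hx' : ∀ i, 0 < (a • x) i := fun i => mul_pos ha (hx i)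
  have hy' : ∀ i, 0 < (b • y) i := fun i => mul_pos hb (hy i)
  have hxy : ∀ i, 0 < (a • x + b • y) i := fun i => add_pos (hx' i) (hy' i)
  simp only [smul_eq_mul]
  rw [← hom a x ha hx, ← hom b y hb hy, ee_tele _ k _ hx' l (by omega),
    ee_tele _ k _ hy' l (by omega), ee_tele _ k _ hxy l (by omega)]
  apply geom_super l hl
  · intro j hj
    exact div_pos (ee_pos _ _ (by omega) _ hx') (ee_pos _ _ (by omega) _ hx')
  · intro j hj
    exact div_pos (ee_pos _ _ (by omega) _ hy') (ee_pos _ _ (by omega) _ hy')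
  · intro j hj
    exact phi_super _ _ hx' hy' (k + j) _ (by omega)
end

section
/- Let n ≥ 1, let k be an integer with 0 ≤ k ≤ n-1, and let a_k, a_{k+1} > 0. Then the function x ↦ ( a_k·σ_k(x) + a_{k+1}·σ_{k+1}(x) )^{1/(k+1)} is concave on the positive orthant (0, ∞)ⁿ. -/
noncomputable def EE {ι : Type*} (s : Finset ι) (k : ℕ) (x : ι → ℝ) : ℝ :=
  ∑ t ∈ Finset.powersetCard k s, ∏ i ∈ t, x i

theorem EE_zero {ι : Type*} (s : Finset ι) (x : ι → ℝ) : EE s 0 x = 1 := by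
  simp [EE]

theorem EE_insert {ι : Type*} [DecidableEq ι] (s : Finset ι) (i : ι) (hi : i ∉ s) (k : ℕ)
    (x : ι → ℝ) : EE (insert i s) (k + 1) x = EE s (k + 1) x + x i * EE s k x := by
  unfold EE
  rw [Finset.powersetCard_succ_insert hi, Finset.sum_union, Finset.sum_image, Finset.mul_sum]
  · congr 1
    refine Finset.sum_congr rfl fun t ht => ?_
    rw [Finset.prod_insert]
    exact fun h => hi ((Finset.mem_powersetCard.1 ht).1 h)
  · intro t ht t' ht' h
    have h1 : i ∉ t := fun h => hi ((Finset.mem_powersetCard.1 ht).1 h)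
    have h2 : i ∉ t' := fun h => hi ((Finset.mem_powersetCard.1 ht').1 h)
    rw [← Finset.erase_insert h1, ← Finset.erase_insert h2]
    exact congrArg (fun z => z.erase i) h
  · rw [Finset.disjoint_left]
    intro t ht ht'
    obtain ⟨u, hu, rfl⟩ := Finset.mem_image.1 ht'
    exact hi ((Finset.mem_powersetCard.1 ht).1 (Finset.mem_insert_self _ _))

theorem EE_sum {ι : Type*} [DecidableEq ι] (s : Finset ι) (x : ι → ℝ) : ∀ k : ℕ,
    ∑ i ∈ s, x i * EE (s.erase i) k x = (k + 1) * EE s (k + 1) x := by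
  induction s using Finset.induction_on with
  | empty =>
    intro k
    have : Finset.powersetCard (k + 1) (∅ : Finset ι) = ∅ :=
      Finset.powersetCard_eq_empty.2 (by simp)
    simp [EE, this]
  | insert j s hj ih =>
    intro k
    rw [Finset.sum_insert hj, Finset.erase_insert hj, EE_insert s j hj]
    have he : ∀ i ∈ s, (insert j s).erase i = insert j (s.erase i) := by
      intro i hi
      rw [Finset.erase_insert_of_ne]
      rintro rfl; exact hj hi
    rcases k with _ | k
    · have := ih 0
      simp only [EE_zero] at this ⊢
      rw [this]; push_cast; ring
    · have h1 : ∑ i ∈ s, x i * EE ((insert j s).erase i) (k + 1) x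
          = ∑ i ∈ s, x i * EE (s.erase i) (k + 1) x
            + x j * ∑ i ∈ s, x i * EE (s.erase i) k x := by
        rw [Finset.mul_sum, ← Finset.sum_add_distrib]
        refine Finset.sum_congr rfl fun i hi => ?_
        rw [he i hi, EE_insert _ _ (fun h => hj (Finset.mem_of_mem_erase h))]
        ring
      rw [h1, ih, ih]; push_cast; ring

theorem EE_pos {ι : Type*} (s : Finset ι) (k : ℕ) (x : ι → ℝ) (hx : ∀ i, 0 < x i)
    (hk : k ≤ s.card) : 0 < EE s k x := by
  unfold EE
  exact Finset.sum_pos (fun t _ => Finset.prod_pos fun i _ => hx i)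
    (Finset.powersetCard_nonempty.2 hk)

theorem EE_smul {ι : Type*} (s : Finset ι) (k : ℕ) (x : ι → ℝ) (c : ℝ) :
    EE s k (c • x) = c ^ k * EE s k x := by
  unfold EE
  rw [Finset.mul_sum]
  refine Finset.sum_congr rfl fun t ht => ?_
  simp [Finset.prod_mul_distrib, (Finset.mem_powersetCard.1 ht).2]

theorem par_mono {a b q : ℝ} (ha : 0 < a) (hb : 0 < b) (h : b ≤ q) :
    a * b / (a + b) ≤ a * q / (a + q) := by
  rw [div_le_div_iff₀ (by linarith) (by linarith)]
  nlinarith [mul_le_mul_of_nonneg_left h (mul_pos ha ha).le]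

theorem par_add {a b c d : ℝ} (ha : 0 < a) (hb : 0 < b) (hc : 0 < c) (hd : 0 < d) :
    a * b / (a + b) + c * d / (c + d) ≤ (a + c) * (b + d) / ((a + c) + (b + d)) := by
  rw [div_add_div _ _ (by positivity) (by positivity),
    div_le_div_iff₀ (by positivity) (by positivity)]
  nlinarith [sq_nonneg (a * d - b * c)]

theorem quot_eq {ι : Type*} [DecidableEq ι] (s : Finset ι) (k : ℕ) (x : ι → ℝ)
    (hx : ∀ i, 0 < x i) (hk : k + 2 ≤ s.card) :
    EE s (k + 2) x / EE s (k + 1) x = ((k : ℝ) + 2)⁻¹ * ∑ i ∈ s,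
      x i * (EE (s.erase i) (k + 1) x / EE (s.erase i) k x) /
        (x i + EE (s.erase i) (k + 1) x / EE (s.erase i) k x) := by
  have h := EE_sum s x (k + 1)
  have h2 : EE s (k + 2) x = ((k : ℝ) + 2)⁻¹ * ∑ i ∈ s, x i * EE (s.erase i) (k + 1) x := by
    rw [h]; push_cast
    have : (k : ℝ) + 2 ≠ 0 := by positivity
    field_simp
    ring
  rw [h2, mul_div_assoc, Finset.sum_div]
  congr 1
  refine Finset.sum_congr rfl fun i hi => ?_
  have hc := Finset.card_erase_of_mem hi
  have p1 := EE_pos (s.erase i) k x hx (by omega)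
  have p2 := EE_pos (s.erase i) (k + 1) x hx (by omega)
  have e := EE_insert (s.erase i) i (Finset.notMem_erase i s) k x
  rw [Finset.insert_erase hi] at e
  rw [e]
  have := hx i
  field_simp
  ring

theorem quot_super {ι : Type*} [DecidableEq ι] (x y : ι → ℝ)
    (hx : ∀ i, 0 < x i) (hy : ∀ i, 0 < y i) (k : ℕ) : ∀ s : Finset ι, k + 1 ≤ s.card →
    EE s (k + 1) x / EE s k x + EE s (k + 1) y / EE s k y
      ≤ EE s (k + 1) (x + y) / EE s k (x + y) := by
  induction k with
  | zero =>
    intro s hs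
    have h1 : ∀ z : ι → ℝ, EE s 1 z = ∑ i ∈ s, z i := by
      intro z
      have := EE_sum s z 0
      simpa [EE_zero] using this.symm
    simp [EE_zero, h1, Finset.sum_add_distrib]
  | succ k ih =>
    intro s hs
    have hxy : ∀ i, 0 < (x + y) i := fun i => add_pos (hx i) (hy i)
    rw [quot_eq s k x hx hs, quot_eq s k y hy hs, quot_eq s k _ hxy hs, ← mul_add,
      ← Finset.sum_add_distrib]
    refine mul_le_mul_of_nonneg_left (Finset.sum_le_sum fun i hi => ?_) (by positivity)
    have hc := Finset.card_erase_of_mem hi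
    have P : ∀ z : ι → ℝ, (∀ i, 0 < z i) →
        0 < EE (s.erase i) (k + 1) z / EE (s.erase i) k z := fun z hz =>
      div_pos (EE_pos _ _ z hz (by omega)) (EE_pos _ _ z hz (by omega))
    refine (par_add (hx i) (P x hx) (hy i) (P y hy)).trans ?_
    exact par_mono (hxy i) (add_pos (P x hx) (P y hy)) (ih _ (by omega))

theorem geom_super_s10 {a b c d u v : ℝ} (ha : 0 < a) (hb : 0 < b) (hc : 0 < c) (hd : 0 < d)
    (hu : 0 ≤ u) (hv : 0 ≤ v) (huv : u + v = 1) :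
    a ^ u * b ^ v + c ^ u * d ^ v ≤ (a + c) ^ u * (b + d) ^ v := by
  have h1 := Real.geom_mean_le_arith_mean2_weighted hu hv (p₁ := a / (a + c)) (p₂ := b / (b + d))
    (by positivity) (by positivity) huv
  have h2 := Real.geom_mean_le_arith_mean2_weighted hu hv (p₁ := c / (a + c)) (p₂ := d / (b + d))
    (by positivity) (by positivity) huv
  rw [Real.div_rpow (by positivity) (by positivity),
    Real.div_rpow (by positivity) (by positivity)] at h1 h2
  have e : u * (a / (a + c)) + v * (b / (b + d)) + (u * (c / (a + c)) + v * (d / (b + d))) = 1 := by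
    rw [← huv]; field_simp; ring
  have h3 := (add_le_add h1 h2).trans_eq e
  have p1 : 0 < (a + c) ^ u := by positivity
  have p2 : 0 < (b + d) ^ v := by positivity
  rw [div_mul_div_comm, div_mul_div_comm, ← add_div, div_le_one (by positivity)] at h3
  exact h3

theorem EE_super {ι : Type*} [DecidableEq ι] (x y : ι → ℝ)
    (hx : ∀ i, 0 < x i) (hy : ∀ i, 0 < y i) (s : Finset ι) (k : ℕ) : k + 1 ≤ s.card →
    EE s (k + 1) x ^ ((k : ℝ) + 1)⁻¹ + EE s (k + 1) y ^ ((k : ℝ) + 1)⁻¹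
      ≤ EE s (k + 1) (x + y) ^ ((k : ℝ) + 1)⁻¹ := by
  have hxy : ∀ i, 0 < (x + y) i := fun i => add_pos (hx i) (hy i)
  induction k with
  | zero =>
    intro hs
    have := quot_super x y hx hy 0 s hs
    simpa [EE_zero] using this
  | succ k ih =>
    intro hs
    have ih := ih (by omega)
    have hq := quot_super x y hx hy (k + 1) s hs
    have F : ∀ z : ι → ℝ, (∀ i, 0 < z i) → EE s (k + 1 + 1) z ^ (((k + 1 : ℕ) : ℝ) + 1)⁻¹ =
        (EE s (k + 1) z ^ ((k : ℝ) + 1)⁻¹) ^ (((k : ℝ) + 1) / (k + 2)) *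
        (EE s (k + 1 + 1) z / EE s (k + 1) z) ^ (((k : ℝ) + 2)⁻¹) := by
      intro z hz
      have p1 := EE_pos s (k + 1) z hz (by omega)
      have p2 := EE_pos s (k + 1 + 1) z hz (by omega)
      have e : ((k : ℝ) + 1)⁻¹ * (((k : ℝ) + 1) / (k + 2)) = ((k : ℝ) + 2)⁻¹ := by
        field_simp
      have e' : (((k + 1 : ℕ) : ℝ) + 1)⁻¹ = ((k : ℝ) + 2)⁻¹ := by push_cast; ring
      rw [← Real.rpow_mul p1.le, e, e', ← Real.mul_rpow p1.le (by positivity)]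
      congr 1
      field_simp
    rw [F x hx, F y hy, F _ hxy]
    have p1 := EE_pos s (k + 1) x hx (by omega)
    have p2 := EE_pos s (k + 1 + 1) x hx (by omega)
    have p3 := EE_pos s (k + 1) y hy (by omega)
    have p4 := EE_pos s (k + 1 + 1) y hy (by omega)
    refine (geom_super_s10 (by positivity) (by positivity) (by positivity) (by positivity)
      (by positivity) (by positivity) (by field_simp; ring)).trans ?_
    have p5 := EE_pos s (k + 1) _ hxy (by omega)
    gcongr

theorem esymm_ext (n k : ℕ) (c : ℝ) (x : Fin n → ℝ) :
    EE (Finset.univ : Finset (Option (Fin n))) (k + 1) (fun o => o.elim c x)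
      = c * esymm n k x + esymm n (k + 1) x := by
  have h : (Finset.univ : Finset (Option (Fin n))) =
      insert none (Finset.univ.map Function.Embedding.some) := by
    ext o; cases o <;> simp
  have hm : ∀ j, EE (Finset.univ.map (Function.Embedding.some (α := Fin n))) j
      (fun o => o.elim c x) = esymm n j x := by
    intro j
    simp [EE, esymm, Finset.powersetCard_map]
  rw [h, EE_insert _ _ (by simp), hm, hm]
  simp [add_comm]

theorem stmt10 (n k : ℕ) (hn : 1 ≤ n) (hk : k ≤ n - 1) (a b : ℝ) (ha : 0 < a) (hb : 0 < b) :
    ConcaveOn ℝ {x : Fin n → ℝ | ∀ i, 0 < x i}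
      (fun x => (a * esymm n k x + b * esymm n (k + 1) x) ^ (((k : ℝ) + 1)⁻¹)) := by
  let X : (Fin n → ℝ) → Option (Fin n) → ℝ := fun x o => o.elim (a / b) x
  have hX : ∀ x : Fin n → ℝ, (∀ i, 0 < x i) → ∀ o, 0 < X x o := by
    intro x hx o
    cases o
    · exact div_pos ha hb
    · exact hx _
  have hcard : k + 1 ≤ (Finset.univ : Finset (Option (Fin n))).card := by
    simp; omega
  have key : ∀ x : Fin n → ℝ, (∀ i, 0 < x i) →
      (a * esymm n k x + b * esymm n (k + 1) x) ^ (((k : ℝ) + 1)⁻¹) =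
      b ^ (((k : ℝ) + 1)⁻¹) * EE Finset.univ (k + 1) (X x) ^ (((k : ℝ) + 1)⁻¹) := by
    intro x hx
    rw [← Real.mul_rpow hb.le (EE_pos _ _ _ (hX x hx) hcard).le, esymm_ext]
    congr 1
    field_simp
  have hsm : ∀ (x : Fin n → ℝ) (c : ℝ), (∀ i, 0 < x i) → 0 < c →
      EE Finset.univ (k + 1) (c • X x) ^ (((k : ℝ) + 1)⁻¹) =
      c * EE Finset.univ (k + 1) (X x) ^ (((k : ℝ) + 1)⁻¹) := by
    intro x c hx hc
    rw [EE_smul, Real.mul_rpow (by positivity) (EE_pos _ _ _ (hX x hx) hcard).le]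
    congr 1
    have := Real.pow_rpow_inv_natCast hc.le (Nat.succ_ne_zero k)
    simpa using this
  have hconv : Convex ℝ {x : Fin n → ℝ | ∀ i, 0 < x i} := by
    have : {x : Fin n → ℝ | ∀ i, 0 < x i} = Set.univ.pi fun _ => Set.Ioi 0 := by
      ext; simp
    rw [this]
    exact convex_pi fun _ _ => convex_Ioi 0
  rw [concaveOn_iff_forall_pos]
  refine ⟨hconv, ?_⟩
  intro x hx y hy s t hs ht hst
  have hz : ∀ i, 0 < (s • x + t • y) i := hconv hx hy hs.le ht.le hst
  have hXz : X (s • x + t • y) = s • X x + t • X y := by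
    ext o
    cases o
    · simp [X, ← add_mul, hst]
    · simp [X]
  have hmain := EE_super (s • X x) (t • X y) (fun i => mul_pos hs (hX x hx i))
    (fun i => mul_pos ht (hX y hy i)) Finset.univ k hcard
  rw [hsm x s hx hs, hsm y t hy ht, ← hXz] at hmain
  simp only [smul_eq_mul]
  rw [key x hx, key y hy, key _ hz]
  have := mul_le_mul_of_nonneg_left hmain (Real.rpow_nonneg hb.le (((k : ℝ) + 1)⁻¹))
  linarith
end

section
/- Let p ≥ 1, n ≥ p, and let a₀, a₁, …, a_p ∈ ℝ with a_p > 0. Suppose there exist m ∈ ℕ and a vector λ ∈ (ℝ₊)^{m+p} of non-negative reals such that a_k = a_p·σ_{p-k}(λ) for every 0 ≤ k ≤ p (equivalently, the polynomial Xᵐ·(a₀ + a₁X + … + a_pXᵖ) + R is real-rooted for some polynomial R with non-negative coefficients of degree at most m-1). Then the function f(x) = a₀ + a₁σ₁(x) + … + a_pσ_p(x) is (1/p)-concave on the positive orthant (0, ∞)ⁿ, i.e. f^{1/p} is concave there. -/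
open Polynomial in
/-- Generating polynomial of the elementary symmetric functions. -/
noncomputable def gP {ι : Type} (s : Finset ι) (x : ι → ℝ) : ℝ[X] :=
  ∏ i ∈ s, (1 + C (x i) * X)

/-- Elementary symmetric functions as coefficients. -/
noncomputable def eS {ι : Type} (s : Finset ι) (k : ℕ) (x : ι → ℝ) : ℝ :=
  (gP s x).coeff k

open Polynomial in
theorem eS_eq {ι : Type} (s : Finset ι) (k : ℕ) (x : ι → ℝ) :
    eS s k x = ∑ t ∈ Finset.powersetCard k s, ∏ i ∈ t, x i := by
  classical
  unfold eS gP
  rw [Finset.prod_one_add, finsetSum_coeff, Finset.powersetCard_eq_filter,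
    Finset.sum_filter]
  refine Finset.sum_congr rfl fun t _ => ?_
  rw [Finset.prod_mul_distrib, Finset.prod_const, ← map_prod, coeff_C_mul, coeff_X_pow]
  by_cases h : t.card = k
  · simp [h]
  · simp [h, Ne.symm h]

theorem eS_nonneg {ι : Type} (s : Finset ι) (k : ℕ) (x : ι → ℝ) (hx : ∀ i, 0 ≤ x i) :
    0 ≤ eS s k x := by
  rw [eS_eq]
  exact Finset.sum_nonneg fun t _ => Finset.prod_nonneg fun i _ => hx i

theorem eS_zero {ι : Type} (s : Finset ι) (x : ι → ℝ) : eS s 0 x = 1 := by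
  rw [eS_eq]; simp

theorem eS_smul {ι : Type} (s : Finset ι) (k : ℕ) (c : ℝ) (x : ι → ℝ) :
    eS s k (fun i => c * x i) = c ^ k * eS s k x := by
  rw [eS_eq, eS_eq, Finset.mul_sum]
  refine Finset.sum_congr rfl fun t ht => ?_
  rw [Finset.prod_mul_distrib, Finset.prod_const, (Finset.mem_powersetCard.1 ht).2]

open Polynomial in
theorem eS_rec {ι : Type} [DecidableEq ι] (s : Finset ι) (k : ℕ) (x : ι → ℝ) (i : ι) (hi : i ∈ s) :
    eS s (k+1) x = x i * eS (s.erase i) k x + eS (s.erase i) (k+1) x := by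
  unfold eS
  have : gP s x = C (x i) * (X * gP (s.erase i) x) + gP (s.erase i) x := by
    unfold gP
    rw [← Finset.mul_prod_erase s _ hi]; ring
  rw [this, coeff_add, coeff_C_mul, coeff_X_mul]

open Polynomial in
theorem eS_euler {ι : Type} [DecidableEq ι] (s : Finset ι) (k : ℕ) (x : ι → ℝ) :
    ((k:ℝ)+1) * eS s (k+1) x = ∑ i ∈ s, x i * eS (s.erase i) k x := by
  have h : derivative (gP s x) = ∑ i ∈ s, C (x i) * gP (s.erase i) x := by
    unfold gP
    rw [derivative_prod_finset]
    refine Finset.sum_congr rfl fun i _ => ?_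
    have hd : derivative (1 + C (x i) * X : ℝ[X]) = C (x i) := by simp
    rw [hd, mul_comm]
  have h2 := congrArg (fun q => coeff q k) h
  simp only [coeff_derivative, finsetSum_coeff, coeff_C_mul] at h2
  unfold eS
  rw [← h2]; ring

theorem eS_vanish {ι : Type} (s : Finset ι) (k : ℕ) (x : ι → ℝ) (hx : ∀ i, 0 ≤ x i)
    (h : eS s k x = 0) : eS s (k+1) x = 0 := by
  classical
  rcases k with _ | k
  · rw [eS_zero] at h; norm_num at h
  have h1 := eS_euler s (k+1) x
  rw [Finset.sum_eq_zero] at h1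
  · rcases mul_eq_zero.1 h1 with h2 | h2
    · exact absurd h2 (by positivity)
    · exact h2
  · intro i hi
    have h2 := eS_rec s k x i hi
    have h3 := mul_nonneg (hx i) (eS_nonneg (s.erase i) k x hx)
    have h4 := eS_nonneg (s.erase i) (k+1) x hx
    have : eS (s.erase i) (k+1) x = 0 := by linarith
    rw [this, mul_zero]

/-- Ratio of consecutive elementary symmetric functions. -/
noncomputable def phi {ι : Type} (k : ℕ) (s : Finset ι) (x : ι → ℝ) : ℝ :=
  eS s (k+1) x / eS s k x

theorem phi_nonneg {ι : Type} (k : ℕ) (s : Finset ι) (x : ι → ℝ) (hx : ∀ i, 0 ≤ x i) :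
    0 ≤ phi k s x := div_nonneg (eS_nonneg _ _ _ hx) (eS_nonneg _ _ _ hx)

theorem phi_zero {ι : Type} (s : Finset ι) (x : ι → ℝ) : phi 0 s x = ∑ i ∈ s, x i := by
  classical
  have := eS_euler s 0 x
  simp only [eS_zero] at this
  simp [phi, eS_zero]
  simpa using this

theorem phi_succ {ι : Type} [DecidableEq ι] (k : ℕ) (s : Finset ι) (x : ι → ℝ)
    (hx : ∀ i, 0 ≤ x i) : phi (k+1) s x =
      ((k:ℝ)+2)⁻¹ * ∑ i ∈ s, x i * phi k (s.erase i) x / (x i + phi k (s.erase i) x) := by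
  have h := eS_euler s (k+1) x
  have h1 : eS s (k+1+1) x = ((k:ℝ)+2)⁻¹ * ∑ i ∈ s, x i * eS (s.erase i) (k+1) x := by
    rw [← h]; push_cast
    have : (k:ℝ)+2 ≠ 0 := by positivity
    field_simp
    ring
  unfold phi
  rw [h1, mul_div_assoc, Finset.sum_div]
  congr 1
  refine Finset.sum_congr rfl fun i hi => ?_
  rw [eS_rec s k x i hi]
  by_cases h0 : eS (s.erase i) k x = 0
  · rw [eS_vanish _ _ _ hx h0, h0]; simp
  · have e : x i + eS (s.erase i) (k+1) x / eS (s.erase i) k x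
        = (x i * eS (s.erase i) k x + eS (s.erase i) (k+1) x) / eS (s.erase i) k x := by
      field_simp
    rw [e, mul_div_assoc' , div_div_div_cancel_right₀ h0]

theorem H_mono {a b b' : ℝ} (ha : 0 ≤ a) (hb : 0 ≤ b) (h : b ≤ b') :
    a * b / (a + b) ≤ a * b' / (a + b') := by
  rcases ha.eq_or_lt with rfl | ha
  · simp
  rw [div_le_div_iff₀ (by linarith) (by linarith)]
  nlinarith [mul_nonneg (sq_nonneg a) (sub_nonneg.2 h)]

theorem H_super {a b c d : ℝ} (ha : 0 ≤ a) (hb : 0 ≤ b) (hc : 0 ≤ c) (hd : 0 ≤ d) :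
    a * b / (a + b) + c * d / (c + d) ≤ (a + c) * (b + d) / ((a + c) + (b + d)) := by
  rcases (add_nonneg ha hb).eq_or_lt with h | h
  · have : a = 0 := by linarith
    have : b = 0 := by linarith
    subst_vars; simp
  rcases (add_nonneg hc hd).eq_or_lt with h' | h'
  · have : c = 0 := by linarith
    have : d = 0 := by linarith
    subst_vars; simp
  rw [div_add_div _ _ h.ne' h'.ne', div_le_div_iff₀ (by positivity) (by linarith)]
  nlinarith [sq_nonneg (a * d - b * c)]

theorem phi_super_s12 {ι : Type} (k : ℕ) : ∀ (s : Finset ι) (x y : ι → ℝ)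
    (_ : ∀ i, 0 ≤ x i) (_ : ∀ i, 0 ≤ y i),
    phi k s x + phi k s y ≤ phi k s (fun i => x i + y i) := by
  classical
  induction k with
  | zero => intro s x y _ _; simp [phi_zero, Finset.sum_add_distrib]
  | succ k ih =>
    intro s x y hx hy
    rw [phi_succ _ _ _ hx, phi_succ _ _ _ hy, phi_succ _ _ _ (fun i => add_nonneg (hx i) (hy i)),
      ← mul_add, ← Finset.sum_add_distrib]
    refine mul_le_mul_of_nonneg_left (Finset.sum_le_sum fun i _ => ?_) (by positivity)
    have p1 := phi_nonneg k (s.erase i) x hx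
    have p2 := phi_nonneg k (s.erase i) y hy
    exact (H_super (hx i) p1 (hy i) p2).trans
      (H_mono (add_nonneg (hx i) (hy i)) (add_nonneg p1 p2) (ih _ x y hx hy))

theorem eS_prod {ι : Type} (s : Finset ι) (x : ι → ℝ) (hx : ∀ i, 0 ≤ x i) (p : ℕ) :
    eS s p x = ∏ k ∈ Finset.range p, phi k s x := by
  induction p with
  | zero => simp [eS_zero]
  | succ p ih =>
    rw [Finset.prod_range_succ, ← ih, phi]
    by_cases h : eS s p x = 0
    · rw [eS_vanish _ _ _ hx h, h]; simp
    · field_simp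

theorem gm_super (p : ℕ) (hp : 1 ≤ p) (a b : ℕ → ℝ) (ha : ∀ k, 0 ≤ a k) (hb : ∀ k, 0 ≤ b k) :
    (∏ k ∈ Finset.range p, a k) ^ ((p:ℝ)⁻¹) + (∏ k ∈ Finset.range p, b k) ^ ((p:ℝ)⁻¹)
      ≤ (∏ k ∈ Finset.range p, (a k + b k)) ^ ((p:ℝ)⁻¹) := by
  have hp0 : (0:ℝ) < p := by exact_mod_cast hp
  by_cases h : ∃ k ∈ Finset.range p, a k + b k = 0
  · obtain ⟨k, hk, h⟩ := h
    have h1 : a k = 0 := by linarith [ha k, hb k]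
    have h2 : b k = 0 := by linarith [ha k, hb k]
    rw [Finset.prod_eq_zero hk h1, Finset.prod_eq_zero hk h2, Finset.prod_eq_zero hk h,
      Real.zero_rpow (by positivity)]
    simp
  push Not at h
  have hpos : ∀ k ∈ Finset.range p, 0 < a k + b k := fun k hk =>
    lt_of_le_of_ne (add_nonneg (ha k) (hb k)) (h k hk).symm
  have key : ∀ c : ℕ → ℝ, (∀ k, 0 ≤ c k) → (∏ k ∈ Finset.range p, c k) ^ ((p:ℝ)⁻¹) ≤
      (∑ k ∈ Finset.range p, (p:ℝ)⁻¹ * (c k / (a k + b k))) *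
      (∏ k ∈ Finset.range p, (a k + b k)) ^ ((p:ℝ)⁻¹) := by
    intro c hc
    have hnn : ∀ k ∈ Finset.range p, 0 ≤ c k / (a k + b k) := fun k hk =>
      div_nonneg (hc k) (hpos k hk).le
    have am := Real.geom_mean_le_arith_mean_weighted (Finset.range p) (fun _ => (p:ℝ)⁻¹)
      (fun k => c k / (a k + b k)) (fun _ _ => by positivity)
      (by simp [hp0.ne']) hnn
    rw [Real.finsetProd_rpow _ _ hnn] at am
    have hP : 0 < ∏ k ∈ Finset.range p, (a k + b k) := Finset.prod_pos hpos
    calc _ = ((∏ k ∈ Finset.range p, c k / (a k + b k)) *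
          ∏ k ∈ Finset.range p, (a k + b k)) ^ ((p:ℝ)⁻¹) := by
            rw [Finset.prod_div_distrib, div_mul_cancel₀ _ hP.ne']
      _ = _ := Real.mul_rpow (Finset.prod_nonneg hnn) hP.le
      _ ≤ _ := mul_le_mul_of_nonneg_right am (by positivity)
  refine (add_le_add (key a ha) (key b hb)).trans (le_of_eq ?_)
  rw [← add_mul, ← Finset.sum_add_distrib]
  have : ∑ k ∈ Finset.range p, ((p:ℝ)⁻¹ * (a k / (a k + b k)) + (p:ℝ)⁻¹ * (b k / (a k + b k)))
      = ∑ k ∈ Finset.range p, (p:ℝ)⁻¹ := by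
    refine Finset.sum_congr rfl fun k hk => ?_
    rw [← mul_add, ← add_div, div_self (h k hk), mul_one]
  rw [this]
  simp [hp0.ne']

theorem eS_super {ι : Type} (s : Finset ι) (p : ℕ) (hp : 1 ≤ p) (x y : ι → ℝ)
    (hx : ∀ i, 0 ≤ x i) (hy : ∀ i, 0 ≤ y i) :
    (eS s p x) ^ ((p:ℝ)⁻¹) + (eS s p y) ^ ((p:ℝ)⁻¹) ≤
      (eS s p (fun i => x i + y i)) ^ ((p:ℝ)⁻¹) := by
  rw [eS_prod s x hx, eS_prod s y hy, eS_prod s _ (fun i => add_nonneg (hx i) (hy i))]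
  have p1 := fun k => phi_nonneg k s x hx
  have p2 := fun k => phi_nonneg k s y hy
  refine (gm_super p hp _ _ p1 p2).trans ?_
  refine Real.rpow_le_rpow (Finset.prod_nonneg fun k _ => add_nonneg (p1 k) (p2 k)) ?_
    (by positivity)
  exact Finset.prod_le_prod (fun k _ => add_nonneg (p1 k) (p2 k))
    (fun k _ => phi_super_s12 k s x y hx hy)

theorem eS_sum {N n p : ℕ} (l : Fin N → ℝ) (x : Fin n → ℝ) :
    eS (Finset.univ : Finset (Fin n ⊕ Fin N)) p (Sum.elim x l) =
      ∑ k ∈ Finset.range (p+1), esymm N (p-k) l * esymm n k x := by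
  have e : gP (Finset.univ : Finset (Fin n ⊕ Fin N)) (Sum.elim x l) =
      gP Finset.univ x * gP Finset.univ l := by
    unfold gP
    rw [Fintype.prod_sum_type]; rfl
  unfold eS
  rw [e, Polynomial.coeff_mul, Finset.Nat.sum_antidiagonal_eq_sum_range_succ_mk]
  refine Finset.sum_congr rfl fun k _ => ?_
  have h1 := eS_eq Finset.univ k x
  have h2 := eS_eq Finset.univ (p-k) l
  unfold eS at h1 h2
  simp only [h1, h2, esymm]
  ring

theorem stmt12 (p n : ℕ) (hp : 1 ≤ p) (hn : p ≤ n) (a : ℕ → ℝ) (hap : 0 < a p)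
    (h : ∃ (m : ℕ) (lam : Fin (m + p) → ℝ), (∀ i, 0 ≤ lam i) ∧
      ∀ k ≤ p, a k = a p * esymm (m + p) (p - k) lam) :
    ConcaveOn ℝ {x : Fin n → ℝ | ∀ i, 0 < x i}
      (fun x => (∑ k ∈ Finset.range (p + 1), a k * esymm n k x) ^ ((p : ℝ)⁻¹)) := by
  obtain ⟨m, l, hl, hk⟩ := h
  have hp0 : (p:ℝ) ≠ 0 := by positivity
  have e : ∀ x : Fin n → ℝ, ∑ k ∈ Finset.range (p + 1), a k * esymm n k x =
      a p * eS Finset.univ p (Sum.elim x l) := by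
    intro x
    rw [eS_sum, Finset.mul_sum]
    refine Finset.sum_congr rfl fun k hk' => ?_
    rw [hk k (by simpa [Nat.lt_succ_iff] using hk')]; ring
  simp only [e]
  have hom : ∀ (c : ℝ) (z : Fin n ⊕ Fin (m+p) → ℝ), 0 ≤ c → (∀ i, 0 ≤ z i) →
      (eS Finset.univ p (fun i => c * z i)) ^ ((p:ℝ)⁻¹) =
        c * (eS Finset.univ p z) ^ ((p:ℝ)⁻¹) := by
    intro c z hc hz
    rw [eS_smul, Real.mul_rpow (by positivity) (eS_nonneg _ _ _ hz),
      Real.pow_rpow_inv_natCast hc (by omega)]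
  have hel : ∀ x : Fin n → ℝ, (∀ i, 0 < x i) → ∀ i, 0 ≤ Sum.elim x l i := by
    rintro x hx (i | i)
    · exact (hx i).le
    · exact hl i
  refine ⟨?_, ?_⟩
  · have : {x : Fin n → ℝ | ∀ i, 0 < x i} = Set.pi Set.univ (fun _ => Set.Ioi 0) := by
      ext x; simp
    rw [this]
    exact convex_pi fun _ _ => convex_Ioi 0
  · intro x hx y hy α β hα hβ hab
    have hx' := hel x hx
    have hy' := hel y hy
    have hs := eS_super Finset.univ p hp (fun i => α * Sum.elim x l i)
      (fun i => β * Sum.elim y l i) (fun i => mul_nonneg hα (hx' i))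
      (fun i => mul_nonneg hβ (hy' i))
    rw [hom α _ hα hx', hom β _ hβ hy'] at hs
    have ee : (fun i => α * Sum.elim x l i + β * Sum.elim y l i) =
        Sum.elim (α • x + β • y) l := by
      ext (i | i)
      · simp
      · simp only [Sum.elim_inr]; rw [← add_mul, hab, one_mul]
    rw [ee] at hs
    have hxy : ∀ i, 0 ≤ Sum.elim (α • x + β • y) l i := by
      intro i; rw [← ee]
      exact add_nonneg (mul_nonneg hα (hx' i)) (mul_nonneg hβ (hy' i))
    simp only [smul_eq_mul]
    rw [Real.mul_rpow hap.le (eS_nonneg _ _ _ hx'), Real.mul_rpow hap.le (eS_nonneg _ _ _ hy'),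
      Real.mul_rpow hap.le (eS_nonneg _ _ _ hxy)]
    have := mul_le_mul_of_nonneg_left hs (Real.rpow_nonneg hap.le ((p:ℝ)⁻¹))
    linarith
end

section
/- Let n ≥ 1 and 0 ≤ k ≤ n. For every x ∈ ℝⁿ there exists μ ∈ ℝᵏ such that C(n-l, k-l)·σ_l(x) = C(n, k)·σ_l(μ) for every 0 ≤ l ≤ k, where the σ_l on the left are the elementary symmetric polynomials in n variables and on the right in k variables, and C(·,·) denotes the binomial coefficient. -/
open Polynomial in
lemma splits_derivative_aux (p : ℝ[X]) (hp : p.roots.card = p.natDegree) :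
    (derivative p).roots.card = (derivative p).natDegree := by
  have h1 := Polynomial.card_roots_le_derivative p
  have h2 := Polynomial.card_roots' (derivative p)
  have h3 := Polynomial.natDegree_derivative_le p
  omega

open Polynomial in
lemma splits_iter_aux (p : ℝ[X]) (hp : p.roots.card = p.natDegree) (m : ℕ) :
    (derivative^[m] p).roots.card = (derivative^[m] p).natDegree := by
  induction m with
  | zero => simpa using hp
  | succ m ih =>
    rw [Function.iterate_succ_apply']
    exact splits_derivative_aux _ ih

lemma exists_fin_aux (s : Multiset ℝ) (k : ℕ) (h : s.card = k) :
    ∃ f : Fin k → ℝ, (Finset.univ : Finset (Fin k)).val.map f = s := by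
  induction s using Quot.inductionOn with
  | h l =>
    have h' : l.length = k := by simpa using h
    subst h'
    exact ⟨l.get, by rw [Fin.univ_val_map]; simp⟩

lemma esymm_eq_aux (n l : ℕ) (x : Fin n → ℝ) :
    esymm n l x = ((Finset.univ : Finset (Fin n)).val.map x).esymm l := by
  rw [Finset.esymm_map_val]; rfl

open Polynomial in
theorem stmt16 (n k : ℕ) (hn : 1 ≤ n) (hk : k ≤ n) (x : Fin n → ℝ) :
    ∃ μ : Fin k → ℝ, ∀ l ≤ k,
      (((n - l).choose (k - l) : ℝ)) * esymm n l x = ((n.choose k : ℝ)) * esymm k l μ := by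
  set p : ℝ[X] := ∏ i, (X + C (x i)) with hp
  have hpdeg : p.natDegree = n := by
    rw [hp, natDegree_prod_of_monic _ _ (fun i _ => monic_X_add_C _)]; simp
  have hpr : p.roots.card = p.natDegree := by
    have : p = ((Finset.univ.val.map fun i => - x i).map fun a => X - C a).prod := by
      rw [hp, Multiset.map_map]; simp [Finset.prod]
    rw [hpdeg, this, roots_multiset_prod_X_sub_C]; simp
  have hpc : ∀ l ≤ n, p.coeff (n - l) = esymm n l x := by
    intro l hl
    rw [hp, Finset.prod_X_add_C_coeff _ _ (by simp)]
    simp only [Finset.card_univ, Fintype.card_fin, Nat.sub_sub_self hl]; rfl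
  set q := derivative^[n - k] p with hq
  have hqr : q.roots.card = q.natDegree := splits_iter_aux p hpr _
  have hqc : ∀ l ≤ k, q.coeff (k - l) =
      ((n - k).factorial : ℝ) * (((n - l).choose (k - l) : ℝ) * esymm n l x) := by
    intro l hl
    have e : k - l + (n - k) = n - l := by omega
    rw [hq, coeff_iterate_derivative, e, hpc l (by omega),
      Nat.descFactorial_eq_factorial_mul_choose,
      Nat.choose_symm_of_eq_add (show n - l = (n - k) + (k - l) by omega)]
    simp [mul_assoc]
  have hf : ((n - k).factorial : ℝ) ≠ 0 := by exact_mod_cast Nat.factorial_ne_zero _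
  have hq0 : q.coeff k = ((n - k).factorial : ℝ) * (n.choose k : ℝ) := by
    have := hqc 0 (Nat.zero_le _)
    simpa [esymm] using this
  have hc : (n.choose k : ℝ) ≠ 0 := by exact_mod_cast (Nat.choose_pos hk).ne'
  have hqd : q.natDegree = k := by
    apply le_antisymm
    · have := natDegree_iterate_derivative p (n - k)
      rw [← hq] at this; omega
    · exact le_natDegree_of_ne_zero (by rw [hq0]; exact mul_ne_zero hf hc)
  obtain ⟨μ, hμ⟩ := exists_fin_aux (q.roots.map Neg.neg) k (by simp [hqr, hqd])
  refine ⟨μ, fun l hl => ?_⟩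
  have h := coeff_eq_esymm_roots_of_card hqr (k := k - l) (by omega)
  rw [hqc l hl, leadingCoeff, hqd, hq0, Nat.sub_sub_self hl] at h
  rw [esymm_eq_aux k, hμ, Multiset.esymm_neg]
  apply mul_left_cancel₀ hf
  rw [h]; ring
end

section
/- Let p ≥ 1 and μ, λ ∈ ℝᵖ. Set P = (X+μ₁)⋯(X+μ_p) and Q = (X+λ₁)⋯(X+λ_p) in ℝ[X]. Then Σ_{k=0}^{p} k!·(p-k)!·σ_k(μ + X·𝟙)·σ_{p-k}(λ + X·𝟙) = Σ_{k=0}^{p} P^{(p-k)}·Q^{(k)}, where P^{(j)} denotes the j-th derivative. Equivalently, p!·π_p(μ, λ) = Σ_{k=0}^{p} P^{(p-k)} Q^{(k)}, where π_p(μ, λ) = Σ_{k=0}^{p} σ_k(μ + X·𝟙)·σ_{p-k}(λ + X·𝟙)/C(p,k). -/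
open Polynomial

/-- The univariate polynomial `σ_k(x₁ + X, …, x_p + X)`. -/
noncomputable def esymmPoly (p k : ℕ) (x : Fin p → ℝ) : Polynomial ℝ :=
  ∑ s ∈ Finset.powersetCard k (Finset.univ : Finset (Fin p)), ∏ i ∈ s, (X + C (x i))

theorem iter_der_aux (p k : ℕ) (hk : k ≤ p) (x : Fin p → ℝ) :
    Polynomial.derivative^[k] (∏ i : Fin p, (X + C (x i)))
      = C (k.factorial : ℝ) * esymmPoly p (p - k) x := by
  have h := congrFun (Polynomial.factorial_smul_hasseDeriv (R := ℝ) k)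
    (∏ i : Fin p, (X + C (x i)))
  rw [← h]
  apply Polynomial.funext
  intro r
  have h2 : (Polynomial.taylor r (∏ i : Fin p, (X + C (x i)))) =
      ∏ i : Fin p, (X + C (r + x i)) := by
    rw [Polynomial.taylor_apply, Polynomial.prod_comp]
    refine Finset.prod_congr rfl fun i _ => ?_
    simp [add_assoc]
  have h3 := Polynomial.taylor_coeff r (∏ i : Fin p, (X + C (x i))) k
  rw [h2, Finset.prod_X_add_C_coeff _ _ (by simpa using hk)] at h3
  rw [LinearMap.smul_apply]
  simp only [nsmul_eq_mul, eval_mul, eval_natCast, eval_C]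
  rw [← h3]
  simp [esymmPoly, eval_finset_sum, eval_prod]

theorem stmt18 (p : ℕ) (hp : 1 ≤ p) (μ lam : Fin p → ℝ)
    (P Q : Polynomial ℝ)
    (hP : P = ∏ i : Fin p, (X + C (μ i)))
    (hQ : Q = ∏ i : Fin p, (X + C (lam i))) :
    (∑ k ∈ Finset.range (p + 1),
        C ((k.factorial : ℝ) * ((p - k).factorial : ℝ))
          * (esymmPoly p k μ * esymmPoly p (p - k) lam)
      = ∑ k ∈ Finset.range (p + 1),
          Polynomial.derivative^[p - k] P * Polynomial.derivative^[k] Q)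
    ∧ (C ((p.factorial : ℝ))
        * ∑ k ∈ Finset.range (p + 1),
            C ((p.choose k : ℝ))⁻¹ * (esymmPoly p k μ * esymmPoly p (p - k) lam)
      = ∑ k ∈ Finset.range (p + 1),
          Polynomial.derivative^[p - k] P * Polynomial.derivative^[k] Q) := by
  have key : ∀ k ∈ Finset.range (p + 1),
      C ((k.factorial : ℝ) * ((p - k).factorial : ℝ))
          * (esymmPoly p k μ * esymmPoly p (p - k) lam)
      = Polynomial.derivative^[p - k] P * Polynomial.derivative^[k] Q := by
    intro k hk
    have hk' : k ≤ p := by simpa [Nat.lt_succ_iff] using hk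
    rw [hP, hQ, iter_der_aux p k hk', iter_der_aux p (p - k) (Nat.sub_le _ _),
      Nat.sub_sub_self hk', C_mul]
    ring
  refine ⟨Finset.sum_congr rfl key, ?_⟩
  rw [Finset.mul_sum]
  refine Finset.sum_congr rfl fun k hk => ?_
  rw [← key k hk, ← mul_assoc, ← C_mul]
  have hk' : k ≤ p := by simpa [Nat.lt_succ_iff] using hk
  have hc : (p.choose k : ℝ) ≠ 0 := by
    exact_mod_cast (Nat.choose_pos hk').ne'
  have hf : (p.choose k : ℝ) * k.factorial * (p - k).factorial = p.factorial := by
    exact_mod_cast Nat.choose_mul_factorial_mul_factorial hk'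
  congr 2
  rw [← hf]
  field_simp
end
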